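/- arXiv:math/9512217 — 2 statements merged into one kernel-verified Lean document; each statement's English description precedes it below -/
import Mathlib

section
/- The set of rational solutions (μ, t) ∈ ℚ × ℚ of the equation t² = 5μ⁴ + 14μ² − 3 is exactly {(1, 4), (1, −4), (−1, 4), (−1, −4)}. -/
/-!
With `μ = a / b` in lowest terms the equation becomes `T² = (5a² - b²)(a² + 3b²)`. Modulo `8` both
`a` and `b` are odd, and then the two factors are `4` times coprime odd numbers, so each is `4` times
a square. Parametrizing the conic `a² + 3b² = 4v²` and splitting `5a² - b² = 4u²` once more
(`covering_points`) leads to a point of the curve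
`D : 4p² + 5s² = 9r², 5p² + 4s² = 9q²`,
and the claim `a² = b²` follows from `p² = s²`.

The heart of the proof is an infinite descent on `D` (`trivial_points`), an explicit form of the
descent via multiplication by `2`. On `D` one has `(q - p)(q + p) = (s - r)(s + r)`; writing the four
factors as `αβ`, `γδ`, `αγ`, `βδ` turns the equations of `D` into
`(β² - γ²)(α² - δ²) = -5αβγδ`.
With `α, δ` and `β, γ` coprime pairs, `αδ ∣ β² - γ²` and `βγ ∣ α² - δ²`, which up to symmetry gives
`β² - γ² = αδ`, `δ² - α² = 5βγ` (`descent_of_coprime`). Writing now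
`α = ef`, `δ = gh`, `β - γ = eg`, `β + γ = fh` gives
`f²(5h² + 4e²) = g²(4h² + 5e²)`,
and coprimality forces `4h² + 5e² = 9f²`, `5h² + 4e² = 9g²`: a smaller point of `D`, again
nontrivial (`descent_step`).
-/

/-! ### Coprimality and factorizations in `ℤ` -/

/-- The four number lemma over `ℤ`. -/
lemma four_number {x y z w : ℤ} (h : x * y = z * w) (hx : x ≠ 0) :
    ∃ α β γ δ : ℤ, x = α * β ∧ y = γ * δ ∧ z = α * γ ∧ w = β * δ ∧ IsCoprime β γ := by
  obtain ⟨g, β, γ, hg, hc, rfl, rfl⟩ := Int.exists_gcd_one' (m := x) (n := z)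
    (Int.gcd_pos_of_ne_zero_left _ hx)
  have hc' : IsCoprime β γ := Int.isCoprime_iff_gcd_eq_one.2 hc
  have hg' : (g : ℤ) ≠ 0 := by exact_mod_cast hg.ne'
  have h1 : β * y = γ * w := mul_left_cancel₀ hg' (by linear_combination h)
  obtain ⟨δ, rfl⟩ : γ ∣ y := hc'.symm.dvd_of_dvd_mul_left ⟨w, h1⟩
  have hγ : γ ≠ 0 ∨ γ = 0 := ne_or_eq _ _
  rcases hγ with hγ | rfl
  · refine ⟨g, β, γ, δ, by ring, by ring, by ring, ?_, hc'⟩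
    exact mul_left_cancel₀ hγ (by linear_combination -h1)
  · -- here `β = ±1`, and the fourth factor is `β * w`
    have hβ : IsUnit β := isCoprime_zero_right.1 hc'
    have hb : β * β = 1 := Int.isUnit_mul_self hβ
    exact ⟨g, β, 0, β * w, by ring, by ring, by ring, by linear_combination -w * hb, hc'⟩

lemma coprime_mul_sq_sub {x y : ℤ} (h : IsCoprime x y) : IsCoprime (x * y) (x ^ 2 - y ^ 2) := by
  apply IsCoprime.mul_left
  · have : IsCoprime x (-(y ^ 2) + x * x) := (h.pow_right (n := 2)).neg_right.add_mul_left_right x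
    convert this using 1; ring
  · have : IsCoprime y (x ^ 2 + y * (-y)) := (h.symm.pow_right (n := 2)).add_mul_left_right _
    convert this using 1; ring

/-- Two coprime integers whose product is a square, with nonzero product, are both squares or both
negatives of squares. -/
lemma sq_sq_of_coprime {x y z : ℤ} (h : IsCoprime x y) (hz : z ≠ 0) (e : x * y = z ^ 2) :
    ∃ r s : ℤ, (x = r ^ 2 ∧ y = s ^ 2) ∨ (x = -r ^ 2 ∧ y = -s ^ 2) := by
  obtain ⟨r, hr⟩ := Int.sq_of_isCoprime h e
  obtain ⟨s, hs⟩ := Int.sq_of_isCoprime h.symm (by rw [mul_comm]; exact e)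
  have hz' : 0 < z ^ 2 := by positivity
  refine ⟨r, s, ?_⟩
  rcases hr with rfl | rfl <;> rcases hs with rfl | rfl
  · exact Or.inl ⟨rfl, rfl⟩
  · nlinarith [mul_nonneg (sq_nonneg r) (sq_nonneg s)]
  · nlinarith [mul_nonneg (sq_nonneg r) (sq_nonneg s)]
  · exact Or.inr ⟨rfl, rfl⟩

/-! ### Infinite descent on `4p² + 5s² = 9r²`, `5p² + 4s² = 9q²` -/

/-- `SmallPoint B`: some `(h, e, f, g)` is a point of the curve `4h² + 5e² = 9f²`,
`5h² + 4e² = 9g²` other than the trivial ones `h² = e²`, and its size `h² + e²` is at most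
`B / 5`. -/
def SmallPoint (B : ℤ) : Prop :=
  ∃ e f g h : ℤ, 4 * h ^ 2 + 5 * e ^ 2 = 9 * f ^ 2 ∧ 5 * h ^ 2 + 4 * e ^ 2 = 9 * g ^ 2 ∧
    h ^ 2 ≠ e ^ 2 ∧ 5 * (h ^ 2 + e ^ 2) ≤ B

lemma not_three_dvd_sq_add_sq {f g : ℤ} (h : IsCoprime f g) : ¬ (3 : ℤ) ∣ f ^ 2 + g ^ 2 := by
  intro h3
  have key : (3 : ℤ) ∣ f ∧ (3 : ℤ) ∣ g := by
    have hf : f % 3 = 0 ∨ f % 3 = 1 ∨ f % 3 = 2 := by omega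
    have hg : g % 3 = 0 ∨ g % 3 = 1 ∨ g % 3 = 2 := by omega
    have h3' : (f ^ 2 + g ^ 2) % 3 = 0 := Int.emod_eq_zero_of_dvd h3
    rcases hf with hf | hf | hf <;> rcases hg with hg | hg | hg <;>
      (simp [pow_two, Int.add_emod, Int.mul_emod, hf, hg] at h3'; try omega)
  have := h.isUnit_of_dvd' key.1 key.2
  rw [Int.isUnit_iff] at this
  omega

/-- The second half of the descent: `4h² + 5e²` and `5h² + 4e²` are `d f²` and `d g²`, where `9 ∣ d`
since `3` does not divide `f² + g²`, and `d ∣ 9` since `e` and `h` are coprime. -/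
lemma descent_step {α β γ δ : ℤ} (hαδ : IsCoprime α δ)
    (hα : α ≠ 0) (hβ : β ≠ 0) (hγ : γ ≠ 0) (hδ : δ ≠ 0)
    (h1 : β ^ 2 - γ ^ 2 = α * δ) (h2 : δ ^ 2 - α ^ 2 = 5 * (β * γ)) :
    SmallPoint ((α ^ 2 + δ ^ 2) * (β ^ 2 + γ ^ 2)) := by
  obtain ⟨e, f, g, h, rfl, rfl, h3, h4, hfg⟩ :=
    four_number (x := α) (y := δ) (z := β - γ) (w := β + γ) (by linear_combination -h1) hα
  have he : e ≠ 0 := left_ne_zero_of_mul hα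
  have hf : f ≠ 0 := right_ne_zero_of_mul hα
  have hg : g ≠ 0 := left_ne_zero_of_mul hδ
  have hh : h ≠ 0 := right_ne_zero_of_mul hδ
  have heh : IsCoprime e h := hαδ.of_mul_left_left.of_mul_right_right
  -- substituting `2β = eg + fh`, `2γ = fh - eg` in `h2`
  have h5 : f ^ 2 * (5 * h ^ 2 + 4 * e ^ 2) = g ^ 2 * (4 * h ^ 2 + 5 * e ^ 2) := by
    have hb : (2 * β) = e * g + f * h := by linear_combination h3 + h4
    have hc : (2 * γ) = f * h - e * g := by linear_combination h4 - h3
    have : 4 * ((g * h) ^ 2 - (e * f) ^ 2) = 5 * ((e * g + f * h) * (f * h - e * g)) := by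
      rw [← hb, ← hc, h2]; ring
    linear_combination -this
  obtain ⟨d, hd⟩ : g ^ 2 ∣ 5 * h ^ 2 + 4 * e ^ 2 :=
    (hfg.symm.pow (m := 2) (n := 2)).dvd_of_dvd_mul_left ⟨_, h5⟩
  have hd' : 4 * h ^ 2 + 5 * e ^ 2 = f ^ 2 * d :=
    mul_left_cancel₀ (pow_ne_zero 2 hg) (by rw [← h5, hd]; ring)
  have h9 : (9 : ℤ) ∣ d := by
    have hc3 : IsCoprime (3 : ℤ) (f ^ 2 + g ^ 2) :=
      (Int.prime_three.coprime_iff_not_dvd).2 (not_three_dvd_sq_add_sq hfg)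
    have hc9 : IsCoprime (9 : ℤ) (f ^ 2 + g ^ 2) := by
      have := hc3.pow_left (m := 2); norm_num at this; exact this
    exact hc9.dvd_of_dvd_mul_left ⟨h ^ 2 + e ^ 2, by linear_combination -hd - hd'⟩
  have hd9 : d ∣ 9 := by
    obtain ⟨x, y, hxy⟩ := (heh.pow (m := 2) (n := 2))
    refine ⟨x * (5 * f ^ 2 - 4 * g ^ 2) + y * (5 * g ^ 2 - 4 * f ^ 2), ?_⟩
    linear_combination (-9) * hxy + (5 * y - 4 * x) * hd + (5 * x - 4 * y) * hd'
  have hdpos : 0 < d := by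
    have : 0 < g ^ 2 * d := by rw [← hd]; positivity
    exact pos_of_mul_pos_right this (sq_nonneg g)
  obtain rfl : d = 9 := le_antisymm (Int.le_of_dvd (by norm_num) hd9) (Int.le_of_dvd hdpos h9)
  refine ⟨e, f, g, h, by linear_combination hd', by linear_combination hd, ?_, ?_⟩
  · -- `h² = e²` would force `f² = g² = e²`, hence `α² = δ²` and `βγ = 0`
    intro hhe
    have hfe : f ^ 2 = e ^ 2 := by linarith
    have hge : g ^ 2 = e ^ 2 := by linarith
    have : 5 * (β * γ) = 0 := by
      rw [← h2, mul_pow, mul_pow, hge, hfe, hhe]; ring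
    exact mul_ne_zero hβ hγ (by linarith)
  · have hf1 : 1 ≤ f ^ 2 := by
      have : 0 < f ^ 2 := by positivity
      omega
    have hg1 : 1 ≤ g ^ 2 := by
      have : 0 < g ^ 2 := by positivity
      omega
    have hA : h ^ 2 + e ^ 2 ≤ (e * f) ^ 2 + (g * h) ^ 2 := by
      nlinarith [mul_nonneg (sq_nonneg e) (sub_nonneg.2 hf1),
        mul_nonneg (sq_nonneg h) (sub_nonneg.2 hg1)]
    -- `β` and `γ` are nonzero and `|β| ≠ |γ|`
    have hB : 5 ≤ β ^ 2 + γ ^ 2 := by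
      have hne : β ^ 2 ≠ γ ^ 2 := by
        intro hb
        exact mul_ne_zero hα hδ (by rw [← h1, hb, sub_self])
      have hb1 : 1 ≤ |β| := Int.one_le_abs hβ
      have hc1 : 1 ≤ |γ| := Int.one_le_abs hγ
      rw [Ne, sq_eq_sq_iff_abs_eq_abs] at hne
      rw [← sq_abs β, ← sq_abs γ]
      rcases lt_or_gt_of_ne hne with hlt | hlt <;> nlinarith
    nlinarith [sq_nonneg h, sq_nonneg e]

/-- The relation splits as `β² - γ² = k αδ`, `α² - δ² = l βγ` with `kl = -5`; the four possible
`(k, l)` are exchanged by permuting `α, β, γ, δ`. -/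
lemma descent_of_coprime {α β γ δ : ℤ} (hαδ : IsCoprime α δ) (hβγ : IsCoprime β γ)
    (hα : α ≠ 0) (hβ : β ≠ 0) (hγ : γ ≠ 0) (hδ : δ ≠ 0)
    (h : (β ^ 2 - γ ^ 2) * (α ^ 2 - δ ^ 2) = -5 * (α * β * γ * δ)) :
    SmallPoint ((α ^ 2 + δ ^ 2) * (β ^ 2 + γ ^ 2)) := by
  obtain ⟨k, hk⟩ : α * δ ∣ β ^ 2 - γ ^ 2 :=
    (coprime_mul_sq_sub hαδ).dvd_of_dvd_mul_right ⟨-5 * (β * γ), by rw [h]; ring⟩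
  obtain ⟨l, hl⟩ : β * γ ∣ α ^ 2 - δ ^ 2 :=
    (coprime_mul_sq_sub hβγ).dvd_of_dvd_mul_left ⟨-5 * (α * δ), by rw [h]; ring⟩
  have hkl : k * l = -5 := by
    rw [hk, hl] at h
    have h0 : α * β * γ * δ ≠ 0 := by positivity
    exact mul_left_cancel₀ h0 (by linear_combination h)
  have hk5 : k ∣ 5 := ⟨-l, by linarith⟩
  have hkle : k ≤ 5 := Int.le_of_dvd (by norm_num) hk5
  have hkge : -5 ≤ k := by
    have := Int.le_of_dvd (by norm_num) ((neg_dvd).2 hk5); omega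
  have hcases : (k = 1 ∧ l = -5) ∨ (k = -1 ∧ l = 5) ∨ (k = 5 ∧ l = -1) ∨ (k = -5 ∧ l = 1) := by
    interval_cases k <;> omega
  rcases hcases with ⟨rfl, rfl⟩ | ⟨rfl, rfl⟩ | ⟨rfl, rfl⟩ | ⟨rfl, rfl⟩
  · exact descent_step hαδ hα hβ hγ hδ (by linarith) (by linarith)
  · convert descent_step hαδ.symm hδ hγ hβ hα (by linarith) (by linarith) using 1; ring
  · convert descent_step hβγ.symm hγ hδ hα hβ (by linarith) (by linarith) using 1; ring
  · convert descent_step hβγ hβ hα hδ hγ (by linarith) (by linarith) using 1; ring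

/-- The relation is homogeneous in `(α, δ)` and in `(β, γ)`, so both pairs may be divided by their
greatest common divisors. -/
lemma descent {α β γ δ : ℤ} (hα : α ≠ 0) (hβ : β ≠ 0) (hγ : γ ≠ 0) (hδ : δ ≠ 0)
    (h : (β ^ 2 - γ ^ 2) * (α ^ 2 - δ ^ 2) = -5 * (α * β * γ * δ)) :
    SmallPoint ((α ^ 2 + δ ^ 2) * (β ^ 2 + γ ^ 2)) := by
  obtain ⟨m, α, δ, hm, hc, rfl, rfl⟩ := Int.exists_gcd_one' (m := α) (n := δ)
    (Int.gcd_pos_of_ne_zero_left _ hα)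
  obtain ⟨n, β, γ, hn, hc', rfl, rfl⟩ := Int.exists_gcd_one' (m := β) (n := γ)
    (Int.gcd_pos_of_ne_zero_left _ hβ)
  have hm1 : (1 : ℤ) ≤ m := by exact_mod_cast hm
  have hn1 : (1 : ℤ) ≤ n := by exact_mod_cast hn
  have hmn : ((m : ℤ) * n) ^ 2 ≠ 0 := by positivity
  obtain ⟨e, f, g, k, h1, h2, h3, h4⟩ := descent_of_coprime (Int.isCoprime_iff_gcd_eq_one.2 hc)
    (Int.isCoprime_iff_gcd_eq_one.2 hc') (left_ne_zero_of_mul hα) (left_ne_zero_of_mul hβ)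
    (left_ne_zero_of_mul hγ) (left_ne_zero_of_mul hδ)
    (mul_left_cancel₀ hmn (by linear_combination h))
  refine ⟨e, f, g, k, h1, h2, h3, h4.trans ?_⟩
  have hP : 0 ≤ (α ^ 2 + δ ^ 2) * (β ^ 2 + γ ^ 2) := by positivity
  have hQ : 1 ≤ ((m : ℤ) * n) ^ 2 := one_le_pow₀ (one_le_mul_of_one_le_of_one_le hm1 hn1)
  nlinarith [mul_nonneg hP (sub_nonneg.2 hQ)]

/-- The curve `4p² + 5s² = 9r²`, `5p² + 4s² = 9q²` has only the trivial points, by infinite descent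
on `p² + s²`. -/
lemma trivial_points (N : ℕ) : ∀ p q r s : ℤ, 4 * p ^ 2 + 5 * s ^ 2 = 9 * r ^ 2 →
    5 * p ^ 2 + 4 * s ^ 2 = 9 * q ^ 2 → p ^ 2 + s ^ 2 = N → p ^ 2 = s ^ 2 := by
  induction N using Nat.strong_induction_on with
  | _ N ih =>
    intro p q r s h1 h2 hN
    by_contra hne
    have hx : q - p ≠ 0 := fun h0 => hne (by
      have : q = p := by linarith
      subst this; linarith)
    have hy : q + p ≠ 0 := fun h0 => hne (by
      have : q = -p := by linarith
      subst this; linarith [neg_sq p])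
    obtain ⟨α, β, γ, δ, e1, e2, e3, e4, -⟩ := four_number
      (x := q - p) (y := q + p) (z := s - r) (w := s + r) (by linarith) hx
    rw [e1] at hx
    rw [e2] at hy
    have hq : 2 * q = α * β + γ * δ := by linear_combination e1 + e2
    have hp : 2 * p = γ * δ - α * β := by linear_combination e2 - e1
    have hs : 2 * s = α * γ + β * δ := by linear_combination e3 + e4
    have hr : 2 * r = β * δ - α * γ := by linear_combination e4 - e3
    have hrel : (β ^ 2 - γ ^ 2) * (α ^ 2 - δ ^ 2) = -5 * (α * β * γ * δ) := by
      have : 5 * (2 * q) ^ 2 - (2 * p) ^ 2 = 4 * (2 * r) ^ 2 := by linarith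
      rw [hq, hp, hr] at this
      linarith
    have hsize : (α ^ 2 + δ ^ 2) * (β ^ 2 + γ ^ 2) = 4 * N := by
      have : (2 * q) ^ 2 + (2 * p) ^ 2 + (2 * r) ^ 2 + (2 * s) ^ 2 = 8 * N := by linarith
      rw [hq, hp, hr, hs] at this
      linarith
    obtain ⟨e, f, g, h, k1, k2, k3, k4⟩ := descent (left_ne_zero_of_mul hx)
      (right_ne_zero_of_mul hx) (left_ne_zero_of_mul hy) (right_ne_zero_of_mul hy) hrel
    have hnn : 0 ≤ h ^ 2 + e ^ 2 := by positivity
    have hN0 : 0 < (N : ℤ) := by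
      rw [← hN]
      rcases (add_nonneg (sq_nonneg p) (sq_nonneg s)).lt_or_eq with h0 | h0
      · exact h0
      · exact absurd (by nlinarith [sq_nonneg p, sq_nonneg s]) hne
    lift h ^ 2 + e ^ 2 to ℕ using hnn with M hM
    rw [hsize] at k4
    exact k3 (ih M (by omega) h g f e k1 k2 hM.symm)

/-! ### From the quartic to the descent curve -/

lemma sq_emod_eight {x : ℤ} (hx : Odd x) : ∃ k, x ^ 2 = 8 * k + 1 := by
  obtain ⟨k, hk⟩ := Int.eight_dvd_sq_sub_one_of_odd hx
  exact ⟨k, by linarith⟩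

/-- If the ideal `(X, Y)` contains `4a²` and `4b²` with `a`, `b` coprime, then it contains `4`; for
odd `X` it is therefore the unit ideal. -/
lemma coprime_of_combination {X Y a b c d c' d' : ℤ} (hab : IsCoprime a b) (hX : Odd X)
    (ha : c * X + d * Y = 4 * a ^ 2) (hb : c' * X + d' * Y = 4 * b ^ 2) : IsCoprime X Y := by
  obtain ⟨x, y, hxy⟩ := hab.pow (m := 2) (n := 2)
  have h4 : IsCoprime X 4 := by
    have := (Int.isCoprime_two_right.2 hX).pow_right (n := 2)
    norm_num at this
    exact this
  obtain ⟨z, w, hzw⟩ := h4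
  exact ⟨z + w * (x * c + y * c'), w * (x * d + y * d'), by
    linear_combination hzw + w * 4 * hxy + w * x * ha + w * y * hb⟩

/-- The primitive odd points of the `2`-covering `5a² - b² = 4u²`, `a² + 3b² = 4v²` of the quartic
are trivial. Parametrizing the second conic by `b = pq`, `2a = ±(3q² - p²)` turns the first equation
into `(p² - 5q²)(5p² - 9q²) = 16u²`, whose two factors are, up to a common sign, `4` times odd
squares; this gives a point of the curve in `trivial_points`. -/
lemma covering_points {a b u v : ℤ} (hab : IsCoprime a b) (ha : Odd a) (hb : Odd b)
    (h1 : 5 * a ^ 2 - b ^ 2 = 4 * u ^ 2) (h2 : a ^ 2 + 3 * b ^ 2 = 4 * v ^ 2) : a ^ 2 = b ^ 2 := by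
  have hb0 : b ≠ 0 := by rintro rfl; simp at hb
  have hu0 : u ≠ 0 := by
    rintro rfl
    obtain ⟨k, hk⟩ := sq_emod_eight ha
    obtain ⟨l, hl⟩ := sq_emod_eight hb
    omega
  -- the sign of `a` may be chosen so that `3` divides `2v + a`
  wlog h3 : (3 : ℤ) ∣ 2 * v + a generalizing a
  · have h3' : (3 : ℤ) ∣ (2 * v + a) * (2 * v + -a) := ⟨b ^ 2, by linear_combination -h2⟩
    have := this hab.neg_left ha.neg (by linarith [neg_sq a]) (by linarith [neg_sq a])
      ((Int.prime_three.dvd_or_dvd h3').resolve_left h3)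
    linarith [neg_sq a]
  obtain ⟨c, hc⟩ := h3
  have hprod : (2 * v - a) * c = b ^ 2 := by
    have : 3 * ((2 * v - a) * c) = 3 * b ^ 2 := by linear_combination -(2 * v - a) * hc - h2
    linarith
  have hodd : Odd (2 * v - a) := (even_two_mul v).sub_odd ha
  have h3a : ¬ (3 : ℤ) ∣ a := by
    rintro ⟨a', rfl⟩
    obtain ⟨v', rfl⟩ : (3 : ℤ) ∣ v := by omega
    have h3b : (3 : ℤ) ∣ b :=
      Int.prime_three.dvd_of_dvd_pow (n := 2) ⟨4 * v' ^ 2 - a' ^ 2, by linarith⟩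
    have := hab.isUnit_of_dvd' (dvd_mul_right 3 a') h3b
    rw [Int.isUnit_iff] at this
    omega
  -- `2v - a` is prime to `2` and to `a`, hence to `2v + a = (2v - a) + 2a`
  have hcop : IsCoprime (2 * v - a) (2 * v + a) := by
    have ha3 : IsCoprime a 3 := (Int.prime_three.coprime_iff_not_dvd.2 h3a).symm
    have haXY : IsCoprime a ((2 * v - a) * (2 * v + a)) := by
      have := ha3.mul_right (hab.pow_right (n := 2))
      convert this using 1
      linear_combination -h2
    have h2a : IsCoprime (2 * v - a) (2 * a) :=
      (Int.isCoprime_two_right.2 hodd).mul_right haXY.of_mul_right_left.symm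
    have hsum : 2 * v + a = 2 * a + (2 * v - a) * 1 := by ring
    rw [hsum]
    exact h2a.add_mul_left_right 1
  have hcop' : IsCoprime (2 * v - a) c := by
    rw [hc] at hcop; exact hcop.of_mul_right_right
  have hcop3 : IsCoprime (2 * v - a) 3 := by
    rw [hc] at hcop; exact hcop.of_mul_right_left
  obtain ⟨p, q, hpq⟩ := sq_sq_of_coprime hcop' hb0 hprod
  have hb' : b ^ 2 = p ^ 2 * q ^ 2 := by
    rcases hpq with ⟨e1, e2⟩ | ⟨e1, e2⟩ <;> rw [← hprod, e1, e2] <;> ring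
  have ha' : 4 * a ^ 2 = (3 * q ^ 2 - p ^ 2) ^ 2 := by
    rcases hpq with ⟨e1, e2⟩ | ⟨e1, e2⟩
    · have : 2 * a = 3 * q ^ 2 - p ^ 2 := by linarith
      rw [← this]; ring
    · have : 2 * a = -(3 * q ^ 2 - p ^ 2) := by linarith
      rw [← neg_sq (3 * q ^ 2 - p ^ 2), ← this]; ring
  have hpqc : IsCoprime p q := by
    have : IsCoprime (p ^ 2) (q ^ 2) := by
      rcases hpq with ⟨e1, e2⟩ | ⟨e1, e2⟩
      · rwa [e1, e2] at hcop'
      · rw [e1, e2] at hcop'; exact (IsCoprime.neg_neg_iff _ _).1 hcop'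
    exact (IsCoprime.pow_iff two_pos two_pos).1 this
  have hp3 : ¬ (3 : ℤ) ∣ p := by
    intro hp
    have h3 : (3 : ℤ) ∣ 2 * v - a := by
      rcases hpq with ⟨e1, e2⟩ | ⟨e1, e2⟩ <;> rw [e1]
      · exact dvd_pow hp two_ne_zero
      · exact (dvd_pow hp two_ne_zero).neg_right
    have := hcop3.isUnit_of_dvd' h3 dvd_rfl
    rw [Int.isUnit_iff] at this
    omega
  have hpqodd : Odd (p ^ 2 * q ^ 2) := hb' ▸ hb.pow
  obtain ⟨hp2, hq2⟩ := Int.odd_mul.1 hpqodd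
  have hpo : Odd p := (Int.odd_pow' two_ne_zero).1 hp2
  have hqo : Odd q := (Int.odd_pow' two_ne_zero).1 hq2
  obtain ⟨k, hk⟩ := sq_emod_eight hpo
  obtain ⟨l, hl⟩ := sq_emod_eight hqo
  obtain ⟨R, hR⟩ : ∃ R, p ^ 2 - 5 * q ^ 2 = 4 * R := ⟨2 * k - 10 * l - 1, by linarith⟩
  obtain ⟨S, hS⟩ : ∃ S, 5 * p ^ 2 - 9 * q ^ 2 = 4 * S := ⟨10 * k - 18 * l - 1, by linarith⟩
  have hRo : Odd R := ⟨k - 5 * l - 1, by linarith⟩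
  have hRS : R * S = u ^ 2 := by
    have : (4 * R) * (4 * S) = 16 * u ^ 2 := by
      rw [← hR, ← hS]
      linear_combination 4 * h1 - 5 * ha' + 4 * hb'
    linarith
  have hRScop : IsCoprime R S :=
    coprime_of_combination (c := -9) (d := 5) (c' := -5) (d' := 1) hpqc hRo
      (by linarith) (by linarith)
  obtain ⟨r, s, hrs⟩ := sq_sq_of_coprime hRScop hu0 hRS
  rcases hrs with ⟨rfl, rfl⟩ | ⟨rfl, rfl⟩
  · -- `5p² ≡ 4s²` modulo `3` forces `3 ∣ p`
    exfalso
    have hp : p % 3 = 1 ∨ p % 3 = 2 := by omega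
    have hs : s % 3 = 0 ∨ s % 3 = 1 ∨ s % 3 = 2 := by omega
    have hm : (2 * p ^ 2 + 2 * s ^ 2) % 3 = 0 := by omega
    rcases hp with hp | hp <;> rcases hs with hs | hs | hs <;>
      simp [pow_two, Int.add_emod, Int.mul_emod, hp, hs] at hm
  · have hps : p ^ 2 = s ^ 2 :=
      trivial_points (p ^ 2 + s ^ 2).toNat p q r s (by linarith) (by linarith)
        (Int.toNat_of_nonneg (by positivity)).symm
    have hpq2 : p ^ 2 = q ^ 2 := by linarith
    rw [hpq2] at ha' hb'
    have : 4 * a ^ 2 = 4 * b ^ 2 := by rw [ha', hb']; ring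
    linarith

/-- If `(5a² - b²)(a² + 3b²)` is a square with `a`, `b` coprime, then `a` and `b` are odd, as a
computation modulo `8` shows. -/
lemma odd_of_sq {a b T : ℤ} (hab : IsCoprime a b)
    (h : T ^ 2 = (5 * a ^ 2 - b ^ 2) * (a ^ 2 + 3 * b ^ 2)) : Odd a ∧ Odd b := by
  have hnot : ¬ (Even a ∧ Even b) := by
    rintro ⟨h1, h2⟩
    have := hab.isUnit_of_dvd' h1.two_dvd h2.two_dvd
    rw [Int.isUnit_iff] at this
    omega
  have key : ∀ x y z : ZMod 8, z ^ 2 = (5 * x ^ 2 - y ^ 2) * (x ^ 2 + 3 * y ^ 2) →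
      (x.val % 2 = 1 ∧ y.val % 2 = 1) ∨ (x.val % 2 = 0 ∧ y.val % 2 = 0) := by decide
  have hval : ∀ x : ℤ, ((x : ZMod 8).val : ℤ) = x % 8 := fun x => ZMod.val_intCast x
  have := key a b T (by exact_mod_cast congrArg (Int.cast : ℤ → ZMod 8) h)
  have hva := hval a
  have hvb := hval b
  rw [Int.even_iff, Int.even_iff] at hnot
  rw [Int.odd_iff, Int.odd_iff]
  omega

lemma int_points {a b T : ℤ} (hab : IsCoprime a b)
    (h : T ^ 2 = (5 * a ^ 2 - b ^ 2) * (a ^ 2 + 3 * b ^ 2)) : a ^ 2 = b ^ 2 := by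
  obtain ⟨ha, hb⟩ := odd_of_sq hab h
  obtain ⟨k, hk⟩ := sq_emod_eight ha
  obtain ⟨l, hl⟩ := sq_emod_eight hb
  obtain ⟨X, hX⟩ : ∃ X, 5 * a ^ 2 - b ^ 2 = 4 * X := ⟨10 * k - 2 * l + 1, by linarith⟩
  obtain ⟨Y, hY⟩ : ∃ Y, a ^ 2 + 3 * b ^ 2 = 4 * Y := ⟨2 * k + 6 * l + 1, by linarith⟩
  have hXo : Odd X := ⟨5 * k - l, by linarith⟩
  have hYpos : 0 < Y := by
    have : 0 ≤ a ^ 2 := sq_nonneg a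
    have : 0 ≤ b ^ 2 := sq_nonneg b
    omega
  obtain ⟨t, rfl⟩ : 4 ∣ T := by
    have : (4 : ℤ) ^ 2 ∣ T ^ 2 := ⟨X * Y, by rw [h, hX, hY]; ring⟩
    exact (Int.pow_dvd_pow_iff two_ne_zero).1 this
  have hXY : X * Y = t ^ 2 := by
    rw [hX, hY] at h; linarith
  have ht : t ≠ 0 := by
    rintro rfl
    rcases mul_eq_zero.1 (hXY.trans (zero_pow two_ne_zero)) with h0 | h0
    · subst h0; simp at hXo
    · omega
  have hcop : IsCoprime X Y :=
    coprime_of_combination (c := 3) (d := 1) (c' := -1) (d' := 5) hab hXo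
      (by linarith) (by linarith)
  obtain ⟨u, v, huv⟩ := sq_sq_of_coprime hcop ht hXY
  rcases huv with ⟨rfl, rfl⟩ | ⟨rfl, rfl⟩
  · exact covering_points hab ha hb hX hY
  · nlinarith [sq_nonneg v]


/-- the rational solutions of `t² = 5μ⁴ + 14μ² - 3` are exactly `(±1, ±4)`. -/
theorem stmt_18 :
    {p : ℚ × ℚ | p.2^2 = 5*p.1^4 + 14*p.1^2 - 3} =
      {(1, 4), (1, -4), (-1, 4), (-1, -4)} := by
  ext ⟨μ, t⟩
  simp only [Set.mem_ofPred_eq, Set.mem_insert_iff, Set.mem_singleton_iff, Prod.mk.injEq]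
  constructor
  · intro h
    have hden : (μ.den : ℚ) ≠ 0 := by exact_mod_cast μ.den_ne_zero
    have hμ : μ * μ.den = μ.num := Rat.mul_den_eq_num μ
    -- clearing denominators, `t * μ.den ^ 2` is an integer since its square is
    have hsq : IsSquare (((5 * μ.num ^ 2 - (μ.den : ℤ) ^ 2) *
        (μ.num ^ 2 + 3 * (μ.den : ℤ) ^ 2) : ℤ) : ℚ) := by
      refine ⟨t * μ.den ^ 2, ?_⟩
      push_cast
      rw [← hμ]
      linear_combination -(μ.den : ℚ) ^ 4 * h
    obtain ⟨T, hT⟩ := Rat.isSquare_intCast_iff.1 hsq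
    have hcop : IsCoprime μ.num (μ.den : ℤ) := Rat.isCoprime_num_den μ
    have hab := int_points hcop (T := T) (by rw [hT]; ring)
    have hab' : (μ * μ.den) ^ 2 = (μ.den : ℚ) ^ 2 := by rw [hμ]; exact_mod_cast hab
    have hμ2 : μ ^ 2 = 1 :=
      mul_right_cancel₀ (pow_ne_zero 2 hden) (by linear_combination hab')
    have ht : t ^ 2 = 4 ^ 2 := by rw [h]; linear_combination (5 * μ ^ 2 + 19) * hμ2
    rcases sq_eq_one_iff.1 hμ2 with h1 | h1 <;>
      rcases sq_eq_sq_iff_eq_or_eq_neg.1 ht with h2 | h2 <;> simp [h1, h2]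
  · rintro (⟨rfl, rfl⟩ | ⟨rfl, rfl⟩ | ⟨rfl, rfl⟩ | ⟨rfl, rfl⟩) <;> norm_num
end

section
/- The set of rational solutions (μ, t) ∈ ℚ × ℚ of the equation t² = 5μ⁴ − 8μ³ + 6μ² + 8μ + 5 is exactly {(1, 4), (1, −4), (−1, 4), (−1, −4)}. -/
/-!
Substituting `x = t - 2(μ² + 1)` and `y = μ² - 1` turns the equation into
`(x² - y²)(x² - 17y²) = z²` with `z` rational (when `y ≠ 0`). After clearing denominators to
coprime integers, both factors are squares up to a common sign: a common factor `2` is excluded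
modulo powers of `2` (`quartic`). If the sign is negative, `y² - x² = A²` and `17y² - x² = B²`
give `B² - A² = (4y)²` and `B² - 17A² = (4x)²`, so that (translation by a 2-torsion point) one is
back to the positive sign, which is the system `x² - y² = A²`, `x² - 17y² = B²`.

The heart of the proof is that this system forces `y = 0` (`concordant`), by infinite descent.
Suppose `x, y` are coprime. For odd `y`, the numbers `x - A` and `x + B` (up to the sign of `B`) are
odd squares, so `8 ∣ A + B`, while `4 ∣ A`, `4 ∣ B` and `(A/4)² - (B/4)² = y²` is odd, a
contradiction. For even `y`, halving the corresponding point of `Y² = X(X - 1)(X - 17)` with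
`X = x²/y²` yields the smaller solution `(q, p')`, where `q² = (x + B)/2` and `p'² = (x - A)/2`.
-/

/-! ### Coprime factors of a square -/

lemma isCoprime_of_comb {a b c : ℤ} (h : IsCoprime (a + c * b) (a * b)) : IsCoprime a b :=
  IsCoprime.of_add_mul_right_left (z := c) h.of_mul_right_right

lemma eq_sq_of_coprime_of_nonneg {a b c : ℤ} (h : IsCoprime a b) (e : a * b = c ^ 2)
    (ha : 0 ≤ a) : ∃ r, a = r ^ 2 := by
  obtain ⟨r, hr | hr⟩ := Int.sq_of_isCoprime h e
  · exact ⟨r, hr⟩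
  · exact ⟨0, by nlinarith [sq_nonneg r]⟩

lemma emod_eight_of_odd_sq {a r : ℤ} (h : a = r ^ 2) (ha : a % 2 = 1) : a % 8 = 1 := by
  have hr : Odd r := by
    rw [← Int.odd_iff, h] at ha
    exact Int.Odd.of_mul_left (n := r) (by rwa [← sq])
  have h8 : (8 : ℤ) ∣ r ^ 2 - 1 := Int.eight_dvd_sq_sub_one_of_odd hr
  omega

/-! ### The system `x² - y² = A²`, `x² - 17y² = B²` -/

/-- A solution with `y` odd would have `x - A ≡ x + B ≡ 1` modulo `8` for a suitable sign of `B`,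
which contradicts `(A/4)² - (B/4)² = y²`. -/
lemma not_odd {x y A B : ℤ} (hx : 0 < x) (hc : IsCoprime x y) (hy : y % 2 = 1)
    (h1 : x ^ 2 - y ^ 2 = A ^ 2) (h2 : x ^ 2 - 17 * y ^ 2 = B ^ 2) : False := by
  -- The sign of `B` is chosen so that `17` divides `x - B`.
  wlog h17 : (17 : ℤ) ∣ x - B generalizing B with H
  · have hp : Prime (17 : ℤ) := by norm_num
    have hdvd : (17 : ℤ) ∣ (x - B) * (x + B) := ⟨y ^ 2, by linarith⟩
    rcases hp.dvd_or_dvd hdvd with h | h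
    · exact h17 h
    · exact H (B := -B) (by rw [h2]; ring) (by simpa using h)
  obtain ⟨w, hw⟩ := h17
  have hyO : Odd y := Int.odd_iff.2 hy
  have hy8 : (8 : ℤ) ∣ y ^ 2 - 1 := Int.eight_dvd_sq_sub_one_of_odd hyO
  have hxO : Odd x := by
    by_contra hne
    obtain ⟨k, rfl⟩ := even_iff_two_dvd.1 (Int.not_odd_iff_even.1 hne)
    rcases Int.even_or_odd' A with ⟨l, rfl | rfl⟩ <;> ring_nf at h1 hy8 <;> omega
  have hx8 : (8 : ℤ) ∣ x ^ 2 - 1 := Int.eight_dvd_sq_sub_one_of_odd hxO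
  have four : ∀ C : ℤ, (8 : ℤ) ∣ C ^ 2 → ∃ c, C = 4 * c := by
    intro C hC
    rcases Int.even_or_odd' C with ⟨l, rfl | rfl⟩
    · rcases Int.even_or_odd' l with ⟨k, rfl | rfl⟩
      · exact ⟨k, by ring⟩
      · ring_nf at hC; omega
    · ring_nf at hC; omega
  obtain ⟨a, rfl⟩ := four A (by omega)
  obtain ⟨b, rfl⟩ := four B (by omega)
  have h2c : IsCoprime (2 * x) (y ^ 2) :=
    ((Int.isCoprime_iff_gcd_eq_one.2
      (by rw [← Int.isCoprime_iff_gcd_eq_one]; exact ⟨-(y / 2), 1, by omega⟩)).mul_left hc).pow_right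
  have hxm := Int.odd_iff.1 hxO
  have hA : (x - 4 * a) * (x + 4 * a) = y ^ 2 := by linarith
  have hB : (x + 4 * b) * w = y ^ 2 := by
    have : 17 * ((x + 4 * b) * w) = 17 * y ^ 2 := by linear_combination h2 - (x + 4 * b) * hw
    linarith
  have hy0 : y ≠ 0 := by omega
  have hy2 : 0 < y ^ 2 := by positivity
  obtain ⟨r, hr⟩ := eq_sq_of_coprime_of_nonneg (a := x - 4 * a) (b := x + 4 * a)
    (isCoprime_of_comb (c := 1) (by rw [hA]; convert h2c using 1; ring)) hA
    (by nlinarith)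
  obtain ⟨s, hs⟩ := eq_sq_of_coprime_of_nonneg (a := x + 4 * b) (b := w)
    (isCoprime_of_comb (c := 17) (by rw [hB]; convert h2c using 1; linarith)) hB
    (by nlinarith)
  have e1 := emod_eight_of_odd_sq hr (by omega)
  have e2 := emod_eight_of_odd_sq hs (by omega)
  have hab : (a + b) * (a - b) = y ^ 2 := by linarith
  obtain ⟨k, hk⟩ : (2 : ℤ) ∣ a + b := by omega
  rw [hk, mul_assoc] at hab
  omega

/-- The descent step: halving a solution with `y` even produces a solution `(q, p')` with `p' ≠ 0` and
`|p'| < |y|`. -/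
lemma descent_s19 {x y A B : ℤ} (hx : 0 < x) (hA0 : 0 < A) (hy0 : y ≠ 0) (hc : IsCoprime x y)
    (hy : y % 2 = 0) (h1 : x ^ 2 - y ^ 2 = A ^ 2) (h2 : x ^ 2 - 17 * y ^ 2 = B ^ 2) :
    ∃ x' y' A' B' : ℤ, y' ≠ 0 ∧ y'.natAbs < y.natAbs ∧
      x' ^ 2 - y' ^ 2 = A' ^ 2 ∧ x' ^ 2 - 17 * y' ^ 2 = B' ^ 2 := by
  -- The sign of `B` is chosen so that `17` divides `x - B`.
  wlog h17 : (17 : ℤ) ∣ x - B generalizing B with H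
  · have hp : Prime (17 : ℤ) := by norm_num
    have hdvd : (17 : ℤ) ∣ (x - B) * (x + B) := ⟨y ^ 2, by linarith⟩
    rcases hp.dvd_or_dvd hdvd with h | h
    · exact absurd h h17
    · exact H (B := -B) (by rw [h2]; ring) (by simpa using h)
  obtain ⟨z, rfl⟩ : (2 : ℤ) ∣ y := by omega
  have hz0 : z ≠ 0 := by rintro rfl; simp at hy0
  have hz2 : 0 < z ^ 2 := by positivity
  have hxz : IsCoprime x z := hc.of_mul_right_right
  have hxO : x % 2 = 1 := by
    by_contra hne
    have h := hc.of_mul_right_left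
    have := h.isUnit_of_dvd' (show (2 : ℤ) ∣ x by omega) dvd_rfl
    norm_num [Int.isUnit_iff] at this
  have hx8 : (8 : ℤ) ∣ x ^ 2 - 1 := Int.eight_dvd_sq_sub_one_of_odd (Int.odd_iff.2 hxO)
  have odd' : ∀ C : ℤ, C ^ 2 % 2 = 1 → C % 2 = 1 := by
    intro C hC
    rcases Int.emod_two_eq_zero_or_one C with h | h
    · simp [sq, Int.mul_emod, h] at hC
    · exact h
  have hAO := odd' A (by rw [← h1]; ring_nf; ring_nf at hx8; omega)
  have hBO := odd' B (by rw [← h2]; ring_nf; ring_nf at hx8; omega)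
  have hAz : IsCoprime A (2 * z) := by
    have : IsCoprime (A ^ 2) (2 * z) := by
      rw [← h1]
      have : IsCoprime (x ^ 2 + 2 * z * (-(2 * z))) (2 * z) :=
        IsCoprime.add_mul_left_left hc.pow_left _
      convert this using 1; ring
    exact (IsCoprime.pow_left_iff (by norm_num)).1 this
  have hAz4 : IsCoprime A (2 * (2 * z)) := hAz.of_mul_right_left.mul_right hAz
  obtain ⟨u', hu'⟩ : ∃ u', x - A = 2 * u' := ⟨(x - A) / 2, by omega⟩
  obtain ⟨v, hv⟩ : ∃ v, x + B = 2 * v := ⟨(x + B) / 2, by omega⟩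
  obtain ⟨w, hw⟩ : ∃ w, x - B = 2 * (17 * w) := ⟨(x - B) / 34, by omega⟩
  obtain ⟨m, hm⟩ : ∃ m, A + B = 2 * m := ⟨(A + B) / 2, by omega⟩
  obtain rfl : A = x - 2 * u' := by linarith
  obtain rfl : B = 2 * v - x := by linarith
  obtain rfl : x = v + 17 * w := by linarith
  obtain rfl : m = v - u' := by linarith
  have eu : (v + 17 * w - u') * u' = z ^ 2 := by linarith
  have ev : v * w = z ^ 2 := by linarith
  have em : (v - u') * (v + 17 * w - 2 * u' - (v - u')) = (2 * (2 * z)) ^ 2 := by linarith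
  obtain ⟨p, hp⟩ := eq_sq_of_coprime_of_nonneg (a := v + 17 * w - u') (b := u')
    (isCoprime_of_comb (c := 1) (by rw [eu]; convert hxz.pow_right using 1; ring)) eu
    (by nlinarith)
  obtain ⟨p', hp'⟩ := eq_sq_of_coprime_of_nonneg (a := u') (b := v + 17 * w - u')
    (isCoprime_of_comb (c := 1)
      (by rw [mul_comm u', eu]; convert hxz.pow_right using 1; ring))
    (by rw [mul_comm, eu]) (by nlinarith)
  obtain ⟨q, hq⟩ := eq_sq_of_coprime_of_nonneg (a := v) (b := w)
    (isCoprime_of_comb (c := 17) (by rw [ev]; exact hxz.pow_right)) ev (by nlinarith)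
  obtain ⟨s, hs⟩ := eq_sq_of_coprime_of_nonneg
    (a := v - u') (b := v + 17 * w - 2 * u' - (v - u'))
    (isCoprime_of_comb (c := 1) (by rw [em]; convert hAz4.pow_right using 1; ring)) em
    (by nlinarith)
  have hpp : p ^ 2 * p' ^ 2 = z ^ 2 := by rw [← hp, ← hp', eu]
  have hp0 : p ≠ 0 := by rintro rfl; simp at hpp; exact hz0 (by simpa using hpp.symm)
  have hp'0 : p' ≠ 0 := by rintro rfl; simp at hpp; exact hz0 (by simpa using hpp.symm)
  -- `q² - 17p'²` is an integer and the square of the rational number `sq/p`.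
  have key : p ^ 2 * (v - 17 * u') = (s * q) ^ 2 := by
    rw [mul_pow, ← hs, ← hq, ← hp]; linear_combination 17 * ev - 17 * eu
  obtain ⟨r, hr⟩ : p ∣ s * q := (Int.pow_dvd_pow_iff two_ne_zero).1 ⟨_, key.symm⟩
  refine ⟨q, p', s, r, hp'0, ?_, by rw [← hs, ← hq, ← hp'], ?_⟩
  · have : (p'.natAbs) ∣ z.natAbs := Int.natAbs_dvd_natAbs.2
      ((Int.pow_dvd_pow_iff two_ne_zero).1 ⟨p ^ 2, by rw [← hpp]; ring⟩)
    have := Nat.le_of_dvd (Int.natAbs_pos.2 hz0) this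
    have := Int.natAbs_pos.2 hz0
    rw [Int.natAbs_mul]
    simp only [Int.reduceAbs]
    omega
  · rw [← hq, ← hp']
    rw [hr, mul_pow] at key
    exact mul_left_cancel₀ (pow_ne_zero 2 hp0) key

/-- `x² - y²` and `x² - 17y²` are simultaneously squares only for `y = 0`. -/
lemma concordant {x y A B : ℤ} (h1 : x ^ 2 - y ^ 2 = A ^ 2) (h2 : x ^ 2 - 17 * y ^ 2 = B ^ 2) :
    y = 0 := by
  induction hn : y.natAbs using Nat.strong_induction_on generalizing x y A B with
  | _ n ih =>
  by_contra hy0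
  have hy2 : 0 < y ^ 2 := by positivity
  have hx0 : x ≠ 0 := by rintro rfl; nlinarith [sq_nonneg A]
  have hA0 : A ≠ 0 := by rintro rfl; nlinarith [sq_nonneg B]
  by_cases hc : IsCoprime x y
  · have hc' : IsCoprime |x| y := hc.abs_left
    rcases Int.emod_two_eq_zero_or_one y with hy | hy
    · obtain ⟨x', y', A', B', h0, hlt, e1, e2⟩ := descent_s19 (abs_pos.2 hx0) (abs_pos.2 hA0) hy0 hc' hy
        (by simpa using h1) (by simpa using h2)
      exact h0 (ih _ (hn ▸ hlt) e1 e2 rfl)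
    · exact not_odd (abs_pos.2 hx0) hc' hy (by simpa using h1) (by simpa using h2)
  -- Otherwise dividing by the gcd gives a smaller solution.
  · rw [Int.isCoprime_iff_gcd_eq_one] at hc
    have hg0 : Int.gcd x y ≠ 0 := fun h => hy0 (Int.gcd_eq_zero_iff.1 h).2
    obtain ⟨g, hg⟩ : ∃ g : ℕ, g = Int.gcd x y := ⟨_, rfl⟩
    rw [← hg] at hc hg0
    obtain ⟨a, ha⟩ : (g : ℤ) ∣ x := hg ▸ Int.gcd_dvd_left ..
    obtain ⟨b, hb⟩ : (g : ℤ) ∣ y := hg ▸ Int.gcd_dvd_right ..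
    have hgz : (g : ℤ) ≠ 0 := by exact_mod_cast hg0
    subst ha hb
    obtain ⟨A', rfl⟩ : (g : ℤ) ∣ A :=
      (Int.pow_dvd_pow_iff two_ne_zero).1 ⟨a ^ 2 - b ^ 2, by rw [← h1]; ring⟩
    obtain ⟨B', rfl⟩ : (g : ℤ) ∣ B :=
      (Int.pow_dvd_pow_iff two_ne_zero).1 ⟨a ^ 2 - 17 * b ^ 2, by rw [← h2]; ring⟩
    have hb0 : b ≠ 0 := by rintro rfl; simp at hy0
    refine hb0 (ih b.natAbs ?_ (x := a) (A := A') (B := B')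
      (mul_left_cancel₀ (pow_ne_zero 2 hgz) (by linear_combination h1))
      (mul_left_cancel₀ (pow_ne_zero 2 hgz) (by linear_combination h2)) rfl)
    rw [← hn, Int.natAbs_mul, Int.natAbs_natCast]
    have := Int.natAbs_pos.2 hb0
    have : 2 ≤ g := by omega
    nlinarith

/-! ### The quartic `z² = (x² - y²)(x² - 17y²)` -/

/-- If `x² - y²` and `x² - 17y²` are squares up to sign, their product is not positive unless
`y = 0`. When both signs are negative, `(B, A)` solves the system of `concordant`. -/
lemma of_signed_squares {x y a b A B : ℤ} (hy : y ≠ 0)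
    (ha : x ^ 2 - y ^ 2 = a) (hb : x ^ 2 - 17 * y ^ 2 = b)
    (hA : a = A ^ 2 ∨ a = -A ^ 2) (hB : b = B ^ 2 ∨ b = -B ^ 2) (hab : 0 < a * b) :
    False := by
  subst ha hb
  rcases hA with hA | hA <;> rcases hB with hB | hB
  · exact hy (concordant hA hB)
  · rw [hA, hB] at hab; nlinarith [mul_nonneg (sq_nonneg A) (sq_nonneg B)]
  · rw [hA, hB] at hab; nlinarith [mul_nonneg (sq_nonneg A) (sq_nonneg B)]
  · have : A = 0 := concordant (x := B) (A := 4 * y) (B := 4 * x)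
      (by linear_combination hB - hA) (by linear_combination hB - 17 * hA)
    rw [hA, this] at hab; simp at hab

/-- The gcd of the two factors divides `16`, so that up to sign each is a square or twice a square;
the second possibility fails `2`-adically. -/
lemma quartic {x y z : ℤ} (hy : y ≠ 0) (hc : IsCoprime x y)
    (h : (x ^ 2 - y ^ 2) * (x ^ 2 - 17 * y ^ 2) = z ^ 2) : x ^ 2 = y ^ 2 := by
  by_contra hne
  have hy2 : 0 < y ^ 2 := by positivity
  have hz : z ≠ 0 := by
    rintro rfl
    rcases mul_eq_zero.1 (h.trans (by norm_num)) with h | h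
    · exact hne (by linarith)
    · -- `x² = 17y²` with `x, y` coprime makes `y` a unit, and `17` is not a square.
      have : IsUnit (y ^ 2) := (hc.pow (m := 2) (n := 2)).isUnit_of_dvd' ⟨17, by linarith⟩ dvd_rfl
      have hy1 : y ^ 2 = 1 := by
        rcases Int.isUnit_iff.1 this with h | h <;> omega
      have hx17 : x ^ 2 = 17 := by linarith
      have : x < 5 := by nlinarith
      have : -5 < x := by nlinarith
      interval_cases x <;> omega
  have hpos : 0 < (x ^ 2 - y ^ 2) * (x ^ 2 - 17 * y ^ 2) := by rw [h]; positivity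
  have hc2 : IsCoprime (x ^ 2) (y ^ 2) := hc.pow
  by_cases hpar : (x ^ 2 - y ^ 2) % 2 = 1
  · have hcop : IsCoprime (x ^ 2 - y ^ 2) (x ^ 2 - 17 * y ^ 2) := by
      have e1 : IsCoprime (x ^ 2 - y ^ 2) (y ^ 2) := by
        have := IsCoprime.add_mul_left_left hc2 (-1)
        rwa [show x ^ 2 + y ^ 2 * -1 = x ^ 2 - y ^ 2 by ring] at this
      have e2 : IsCoprime (x ^ 2 - y ^ 2) 2 := ⟨1, -((x ^ 2 - y ^ 2) / 2), by omega⟩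
      have e3 : IsCoprime (x ^ 2 - y ^ 2) (2 ^ 4 * y ^ 2) := e2.pow_right.mul_right e1
      have := IsCoprime.add_mul_left_right e3.neg_right 1
      rwa [show -(2 ^ 4 * y ^ 2) + (x ^ 2 - y ^ 2) * 1 = x ^ 2 - 17 * y ^ 2 by ring] at this
    obtain ⟨A, hA⟩ := Int.sq_of_isCoprime hcop h
    obtain ⟨B, hB⟩ := Int.sq_of_isCoprime hcop.symm ((mul_comm _ _).trans h)
    exact of_signed_squares hy rfl rfl hA hB hpos
  · -- Here `x` and `y` are both odd.
    have hyO : Odd y := by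
      by_contra hyE
      have hyE := Int.not_odd_iff_even.1 hyE
      have hy2E : Even (y ^ 2) := hyE.pow_of_ne_zero two_ne_zero
      have hu := hc2.isUnit_of_dvd' (show (2 : ℤ) ∣ x ^ 2 by have := hy2E.two_dvd; omega)
        hy2E.two_dvd
      norm_num [Int.isUnit_iff] at hu
    have hy8 := Int.eight_dvd_sq_sub_one_of_odd hyO
    have hxO : Odd x := by
      by_contra hxE
      have hx2E : Even (x ^ 2) := (Int.not_odd_iff_even.1 hxE).pow_of_ne_zero two_ne_zero
      have := hx2E.two_dvd
      omega
    have hx8 := Int.eight_dvd_sq_sub_one_of_odd hxO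
    obtain ⟨m, hm⟩ : ∃ m, x ^ 2 - y ^ 2 = 8 * m := ⟨(x ^ 2 - y ^ 2) / 8, by omega⟩
    have hm2 : x ^ 2 - 17 * y ^ 2 = 8 * (m - 2 * y ^ 2) := by linarith
    have hzm : m * (m - 2 * y ^ 2) * 8 ^ 2 = z ^ 2 := by rw [← h, hm, hm2]; ring
    obtain ⟨t, rfl⟩ : (8 : ℤ) ∣ z :=
      (Int.pow_dvd_pow_iff two_ne_zero).1 ⟨_, by rw [← hzm, mul_comm]⟩
    have ht : m * (m - 2 * y ^ 2) = t ^ 2 := by linarith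
    have hmy : IsCoprime m (y ^ 2) := by
      have : IsCoprime (8 * m) (y ^ 2) := by
        rw [← hm]
        have := IsCoprime.add_mul_left_left hc2 (-1)
        rwa [show x ^ 2 + y ^ 2 * -1 = x ^ 2 - y ^ 2 by ring] at this
      exact this.of_mul_left_right
    rcases Int.even_or_odd' m with ⟨k, rfl | hk⟩
    · have htk : k * (k - y ^ 2) * 2 ^ 2 = t ^ 2 := by rw [← ht]; ring
      obtain ⟨r, rfl⟩ : (2 : ℤ) ∣ t :=
        (Int.pow_dvd_pow_iff two_ne_zero).1 ⟨_, by rw [← htk, mul_comm]⟩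
      have hr : k * (k - y ^ 2) = r ^ 2 := by linarith
      have hcop : IsCoprime k (k - y ^ 2) := by
        have := IsCoprime.add_mul_left_right hmy.of_mul_left_right.neg_right 1
        rwa [show -y ^ 2 + k * 1 = k - y ^ 2 by ring] at this
      obtain ⟨A, hA⟩ := Int.sq_of_isCoprime hcop hr
      obtain ⟨B, hB⟩ := Int.sq_of_isCoprime hcop.symm ((mul_comm _ _).trans hr)
      refine of_signed_squares (A := 4 * A) (B := 4 * B) hy rfl rfl ?_ ?_ hpos
      · rw [hm]; rcases hA with hA | hA <;> [left; right] <;> rw [hA] <;> ring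
      · rw [hm2]; rcases hB with hB | hB <;> [left; right] <;> linear_combination 16 * hB
    · -- `m` and `m - 2y²` would be odd squares up to sign, but their difference is `2` modulo `8`.
      have hcop : IsCoprime m (m - 2 * y ^ 2) := by
        have e2 : IsCoprime m 2 := ⟨1, -k, by omega⟩
        have := IsCoprime.add_mul_left_right (e2.mul_right hmy).neg_right 1
        rwa [show -(2 * y ^ 2) + m * 1 = m - 2 * y ^ 2 by ring] at this
      have hpos' : 0 < m * (m - 2 * y ^ 2) := by rw [hm, hm2] at hpos; nlinarith
      obtain ⟨A, hA⟩ := Int.sq_of_isCoprime hcop ht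
      obtain ⟨B, hB⟩ := Int.sq_of_isCoprime hcop.symm ((mul_comm _ _).trans ht)
      rcases hA with hA | hA <;> rcases hB with hB | hB
      · have e1 := emod_eight_of_odd_sq hA (by omega)
        have e2 := emod_eight_of_odd_sq hB (by omega)
        omega
      · rw [hB, hA] at hpos'; nlinarith [mul_nonneg (sq_nonneg A) (sq_nonneg B)]
      · rw [hB, hA] at hpos'; nlinarith [mul_nonneg (sq_nonneg A) (sq_nonneg B)]
      · have e1 := emod_eight_of_odd_sq (a := -m) (r := A) (by linarith) (by omega)
        have e2 := emod_eight_of_odd_sq (a := -(m - 2 * y ^ 2)) (r := B) (by linarith) (by omega)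
        omega

lemma quartic_rat {r w : ℚ} (h : (r ^ 2 - 1) * (r ^ 2 - 17) = w ^ 2) : r ^ 2 = 1 := by
  have hd : (r.den : ℚ) ≠ 0 := by exact_mod_cast r.den_nz
  have hr : (r.num : ℚ) = r * r.den := (Rat.mul_den_eq_num r).symm
  have hsq : IsSquare (((r.num ^ 2 - (r.den : ℤ) ^ 2) *
      (r.num ^ 2 - 17 * (r.den : ℤ) ^ 2) : ℤ) : ℚ) := by
    refine ⟨w * r.den ^ 2, ?_⟩
    push_cast
    rw [hr]
    linear_combination (r.den : ℚ) ^ 4 * h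
  obtain ⟨z, hz⟩ := Rat.isSquare_intCast_iff.1 hsq
  have := quartic (x := r.num) (y := r.den) (z := z) (by exact_mod_cast r.den_nz)
    (Int.isCoprime_iff_gcd_eq_one.2 (by simpa [Int.gcd] using r.reduced)) (by rw [hz, sq])
  have h' : (r.num : ℚ) ^ 2 = (r.den : ℚ) ^ 2 := by exact_mod_cast this
  rw [hr, mul_pow] at h'
  exact mul_right_cancel₀ (pow_ne_zero 2 hd) (by rw [h', one_mul])

/-! ### The original curve -/

/-- the rational solutions of `t² = 5μ⁴ - 8μ³ + 6μ² + 8μ + 5` are exactly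
`(±1, ±4)`. -/
theorem stmt_19 :
    {p : ℚ × ℚ | p.2^2 = 5*p.1^4 - 8*p.1^3 + 6*p.1^2 + 8*p.1 + 5} =
      {(1, 4), (1, -4), (-1, 4), (-1, -4)} := by
  ext ⟨μ, t⟩
  simp only [Set.mem_ofPred_eq, Set.mem_insert_iff, Set.mem_singleton_iff, Prod.mk.injEq]
  constructor
  · intro h
    have hμ : μ ^ 2 = 1 := by
      by_contra hne
      have hp : μ ^ 2 - 1 ≠ 0 := sub_ne_zero.2 hne
      set x := t - 2 * (μ ^ 2 + 1) with hx
      -- The ratio of the two factorisations `(t - 2V)(t + 2V) = y(y - 8μ)`, where `V = μ² + 1`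
      -- and `y = μ² - 1`, is the coordinate on the quartic.
      have hq := quartic_rat (r := x / (μ ^ 2 - 1))
        (w := (x ^ 2 - (μ ^ 2 - 1) ^ 2) * (x + 4 * (μ ^ 2 + 1)) / (μ ^ 2 - 1) ^ 3) (by
          have ht : t = x + 2 * (μ ^ 2 + 1) := by rw [hx]; ring
          rw [ht] at h
          clear_value x
          field_simp
          have key : (μ ^ 2 - 1) ^ 2 * (x ^ 2 - 17 * (μ ^ 2 - 1) ^ 2) =
              (x ^ 2 - (μ ^ 2 - 1) ^ 2) * (x + 4 * (μ ^ 2 + 1)) ^ 2 := by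
            linear_combination (2 * (μ ^ 2 - 1) ^ 2 - x * (x + 4 * (μ ^ 2 + 1)) -
              (μ ^ 2 - 1) * (μ ^ 2 - 1 - 8 * μ)) * h
          linear_combination (x ^ 2 - (μ ^ 2 - 1) ^ 2) * key)
      rw [div_pow, div_eq_one_iff_eq (pow_ne_zero 2 hp)] at hq
      rcases sq_eq_sq_iff_eq_or_eq_neg.1 hq with e | e
      · have ht : t = 3 * μ ^ 2 + 1 := by linarith
        rw [ht] at h
        have : (μ ^ 2 - 1) * (μ + 1) ^ 2 = 0 := by linear_combination h / 4
        rcases mul_eq_zero.1 this with h0 | h0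
        · exact hp h0
        · have : μ = -1 := by linarith [pow_eq_zero_iff two_ne_zero |>.1 h0]
          exact hne (by rw [this]; norm_num)
      · have ht : t = μ ^ 2 + 3 := by linarith
        rw [ht] at h
        have : (μ ^ 2 - 1) * (μ - 1) ^ 2 = 0 := by linear_combination -h / 4
        rcases mul_eq_zero.1 this with h0 | h0
        · exact hp h0
        · have : μ = 1 := by linarith [pow_eq_zero_iff two_ne_zero |>.1 h0]
          exact hne (by rw [this]; norm_num)
    have ht : (t - 4) * (t + 4) = 0 := by
      linear_combination h + (5 * μ ^ 2 - 8 * μ + 11) * hμ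
    rcases mul_eq_zero.1 ht with ht | ht <;> rcases (sq_eq_sq_iff_eq_or_eq_neg.1 (hμ.trans (one_pow 2).symm)) with h1 | h1 <;> grind
  · rintro (⟨rfl, rfl⟩ | ⟨rfl, rfl⟩ | ⟨rfl, rfl⟩ | ⟨rfl, rfl⟩) <;> norm_num
end
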